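/- Let X be a complex Banach space, T a bounded linear operator on X, and β an ordinal. Then 0 ∉ acc^{β+1} σ(T) if and only if there exists a set σ̃ ⊆ σ(T) that is both closed and open in the subspace topology of σ(T), such that 0 ∉ σ(T) \ σ̃ and σ̃ \ {0} ⊆ σ(T) \ acc^β σ(T). -/

import Mathlib

open Ordinal Set

/-- The `α`-th Cantor–Bendixson derivative of a set `A ⊆ ℂ`, defined by transfinite
recursion: `cbd A 0 = A`, `cbd A (β+1) = derivedSet (cbd A β)` (the set of accumulation
points of `cbd A β`), and `cbd A α = ⋂_{β < α} cbd A β` for limit ordinals `α`. -/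
noncomputable def cbd (A : Set ℂ) (α : Ordinal) : Set ℂ :=
  Ordinal.limitRecOn α A (fun _ ih => derivedSet ih)
    (fun α _ ih => ⋂ (β : Set.Iio α), ih β.1 β.2)

variable {X : Type*} [NormedAddCommGroup X] [NormedSpace ℂ X] [CompleteSpace X]

/-- The restriction `T_M` of a bounded operator `T` to a `T`-invariant subspace `M`. -/
noncomputable def restr (T : X →L[ℂ] X) (M : Submodule ℂ X)
    (hM : ∀ x ∈ M, T x ∈ M) : M →L[ℂ] M :=
  { toLinearMap := T.toLinearMap.restrict hM
    cont := (T.continuous.comp continuous_subtype_val).subtype_mk _ }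

/-!
A closed set `A ⊆ ℂ` is the union of a countable set and a perfect one, and the perfect part
survives in every `acc^β A`; hence `A \ acc^β A` is countable. If `x` is not an accumulation point
of `acc^β A`, then `A` coincides with that countable set on a punctured ball around `x`, so
some smaller circle around `x` misses `A`, and the part of `A` inside it is the required spectral
set.
-/

open Metric Topology

theorem cbd_zero (A : Set ℂ) : cbd A 0 = A :=
  limitRecOn_zero ..

theorem cbd_add_one (A : Set ℂ) (α : Ordinal) : cbd A (α + 1) = derivedSet (cbd A α) :=
  limitRecOn_add_one ..

theorem cbd_of_isSuccLimit (A : Set ℂ) {α : Ordinal} (hα : Order.IsSuccLimit α) :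
    cbd A α = ⋂ β : Iio α, cbd A β :=
  limitRecOn_limit _ _ _ _ hα

theorem cbd_subset_of_isClosed {A : Set ℂ} (hA : IsClosed A) (α : Ordinal) : cbd A α ⊆ A := by
  induction α using limitRecOn with
  | zero => exact (cbd_zero A).subset
  | add_one α ih =>
    rw [cbd_add_one]
    exact (derivedSet_mono _ _ ih).trans ((isClosed_iff_derivedSet_subset A).1 hA)
  | limit α hα ih =>
    rw [cbd_of_isSuccLimit A hα]
    exact (iInter_subset _ ⟨⊥, hα.bot_lt⟩).trans (ih ⊥ hα.bot_lt)

theorem subset_cbd_of_preperfect {A D : Set ℂ} (hD : Preperfect D) (hDA : D ⊆ A) (α : Ordinal) :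
    D ⊆ cbd A α := by
  induction α using limitRecOn with
  | zero => rwa [cbd_zero]
  | add_one α ih =>
    rw [cbd_add_one]
    exact (preperfect_iff_subset_derivedSet.1 hD).trans (derivedSet_mono _ _ ih)
  | limit α hα ih =>
    rw [cbd_of_isSuccLimit A hα]
    exact subset_iInter fun β => ih β β.2

theorem countable_diff_cbd {A : Set ℂ} (hA : IsClosed A) (α : Ordinal) :
    (A \ cbd A α).Countable := by
  obtain ⟨V, D, hV, hD, rfl⟩ := exists_countable_union_perfect_of_isClosed hA
  have hDα : D ⊆ cbd (V ∪ D) α := subset_cbd_of_preperfect hD.acc subset_union_right α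
  exact hV.mono fun z hz => hz.1.resolve_right fun hzD => hz.2 (hDα hzD)

theorem exists_sphere_disjoint_of_countable {M : Type*} [PseudoMetricSpace M] {s : Set M}
    (hs : s.Countable) (x : M) {ε : ℝ} (hε : 0 < ε) :
    ∃ r, 0 < r ∧ r < ε ∧ Disjoint (sphere x r) s := by
  obtain ⟨r, hr, hr0, hrε⟩ := ((hs.image (dist · x)).dense_compl ℝ).exists_between hε
  exact ⟨r, hr0, hrε, disjoint_left.2 fun y hyr hys => hr ⟨y, hys, hyr⟩⟩

theorem exists_isClopen_preimage_val_of_notMem_derivedSet {M : Type*} [PseudoMetricSpace M]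
    {A K : Set M} {x : M} (hAK : (A \ K).Countable) (hx : x ∉ derivedSet K) :
    ∃ s ⊆ A, IsClopen (Subtype.val ⁻¹' s : Set A) ∧ x ∉ A \ s ∧ s \ {x} ⊆ A \ K := by
  have hxK : ∀ᶠ y in 𝓝 x, y ≠ x → y ∉ K := by
    simpa [mem_derivedSet, accPt_iff_frequently] using hx
  obtain ⟨ε, hε, hεK⟩ := eventually_nhds_iff_ball.1 hxK
  obtain ⟨r, hr0, hrε, hrAK⟩ := exists_sphere_disjoint_of_countable hAK x hε
  have hrA : Disjoint (sphere x r) A := disjoint_left.2 fun y hyr hyA =>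
    have hyK : y ∉ K := hεK y (sphere_subset_ball hrε hyr) (ne_of_mem_sphere hyr hr0.ne')
    disjoint_left.1 hrAK hyr ⟨hyA, hyK⟩
  refine ⟨A ∩ ball x r, inter_subset_left, ?_, fun h => h.2 ⟨h.1, mem_ball_self hr0⟩, ?_⟩
  · rw [Subtype.preimage_coe_self_inter]
    exact isClopen_preimage_val isOpen_ball (hrA.mono_left frontier_ball_subset_sphere)
  · rintro y ⟨⟨hyA, hyr⟩, hyx⟩
    exact ⟨hyA, hεK y (ball_subset_ball hrε.le hyr) hyx⟩

theorem notMem_derivedSet_of_isOpen_preimage_val {M : Type*} [TopologicalSpace M]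
    {A K s : Set M} {x : M} (hA : IsClosed A) (hKA : K ⊆ A)
    (hs : IsOpen (Subtype.val ⁻¹' s : Set A)) (hx : x ∉ A \ s) (hsK : Disjoint (s \ {x}) K) :
    x ∉ derivedSet K := by
  intro hxK
  have hxA : x ∈ A := (isClosed_iff_derivedSet_subset A).1 hA (derivedSet_mono _ _ hKA hxK)
  have hxs : x ∈ s := by_contra fun h => hx ⟨hxA, h⟩
  have hsA : s ∈ 𝓝[A] x :=
    preimage_coe_mem_nhds_subtype.1 (hs.mem_nhds (x := ⟨x, hxA⟩) hxs)
  obtain ⟨y, ⟨hyx, hyK⟩, hys⟩ :=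
    ((accPt_iff_frequently.1 hxK).and_eventually (mem_nhdsWithin_iff_eventually.1 hsA)).exists
  exact disjoint_left.1 hsK ⟨hys (hKA hyK), hyx⟩ hyK

theorem not_mem_cbd_succ_iff_exists_spectralSet_general {A : Set ℂ} (hA : IsClosed A) (x : ℂ)
    (β : Ordinal) :
    x ∉ cbd A (β + 1) ↔
      ∃ s ⊆ A, IsClopen (Subtype.val ⁻¹' s : Set A) ∧ x ∉ A \ s ∧ s \ {x} ⊆ A \ cbd A β := by
  rw [cbd_add_one]
  constructor
  · exact exists_isClopen_preimage_val_of_notMem_derivedSet (countable_diff_cbd hA β)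
  · rintro ⟨s, -, hs, hxs, hsβ⟩
    exact notMem_derivedSet_of_isOpen_preimage_val hA (cbd_subset_of_isClosed hA β) hs.isOpen hxs
      (disjoint_sdiff_left.mono_left hsβ)

/-- `0 ∉ acc^{β+1} σ(T)` iff there is a spectral set `σ̃` of `T` (i.e. a subset of
`σ(T)` clopen in the subspace topology of `σ(T)`) such that `0 ∉ σ(T) \ σ̃` and
`σ̃ \ {0} ⊆ σ(T) \ acc^β σ(T)`. -/
theorem not_mem_cbd_succ_iff_exists_spectralSet (T : X →L[ℂ] X) (β : Ordinal) :
    (0 : ℂ) ∉ cbd (spectrum ℂ T) (β + 1) ↔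
      ∃ s : Set ℂ, s ⊆ spectrum ℂ T ∧
        IsClopen (Subtype.val ⁻¹' s : Set (spectrum ℂ T)) ∧
        (0 : ℂ) ∉ spectrum ℂ T \ s ∧
        s \ {0} ⊆ spectrum ℂ T \ cbd (spectrum ℂ T) β :=
  not_mem_cbd_succ_iff_exists_spectralSet_general (spectrum.isClosed T) 0 β
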